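/- The checkers interaction preorder includes silent conversion: for all checkers terms t, u, if t =τ u (where =τ is the reflexive, symmetric, transitive closure of silent β-reduction →τ) then t ≼ctx⊛ u. -/

import Mathlib

set_option autoImplicit false

/-! ### Players -/

inductive Player : Type
  | white
  | black
deriving DecidableEq

/-- The opposite player. -/
def Player.op : Player → Player
  | .white => .black
  | .black => .white

/-- `gamma p q` is `0` if the players agree (silent) and `1` otherwise (interaction). -/
def Player.gamma (p q : Player) : ℕ := if p = q then 0 else 1

/-! ### Ordinary λ-terms (de Bruijn representation) -/

inductive Lam : Type
  | var : ℕ → Lam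
  | lam : Lam → Lam
  | app : Lam → Lam → Lam
deriving DecidableEq

namespace Lam

/-- Shift the free de Bruijn indices ≥ `d` by one. -/
def liftAt : Lam → ℕ → Lam
  | .var n, d => .var (if n < d then n else n + 1)
  | .lam t, d => .lam (t.liftAt (d + 1))
  | .app t u, d => .app (t.liftAt d) (u.liftAt d)

/-- Capture-avoiding substitution of `u` for the de Bruijn index `x`. -/
def subst : Lam → ℕ → Lam → Lam
  | .var n, x, u => if n = x then u else if x < n then .var (n - 1) else .var n
  | .lam t, x, u => .lam (t.subst (x + 1) (u.liftAt 0))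
  | .app t s, x, u => .app (t.subst x u) (s.subst x u)

end Lam

/-- Root β-rule: `(λx.t) u ↦ t[x:=u]`. -/
inductive LBetaRoot : Lam → Lam → Prop
  | beta (t u : Lam) : LBetaRoot (.app (.lam t) u) (t.subst 0 u)

/-- Root η-rule: `λx. t x ↦ t` with `x ∉ FV(t)` (enforced by the lifting). -/
inductive LEtaRoot : Lam → Lam → Prop
  | eta (t : Lam) : LEtaRoot (.lam (.app (t.liftAt 0) (.var 0))) t

/-- Closure of a root relation under all contexts. -/
inductive LFull (R : Lam → Lam → Prop) : Lam → Lam → Prop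
  | root {t u : Lam} : R t u → LFull R t u
  | lam {t u : Lam} : LFull R t u → LFull R (.lam t) (.lam u)
  | appL {t t' : Lam} (u : Lam) : LFull R t t' → LFull R (.app t u) (.app t' u)
  | appR (t : Lam) {u u' : Lam} : LFull R u u' → LFull R (.app t u) (.app t u')

/-- Closure under applicative spine contexts `⟨·⟩ t1 … tk`. -/
inductive LSpine (R : Lam → Lam → Prop) : Lam → Lam → Prop
  | root {t u : Lam} : R t u → LSpine R t u
  | appL {t t' : Lam} (u : Lam) : LSpine R t t' → LSpine R (.app t u) (.app t' u)

/-- Closure under head contexts `λx1…xn.⟨·⟩ t1 … tk`. -/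
inductive LHead (R : Lam → Lam → Prop) : Lam → Lam → Prop
  | spine {t u : Lam} : LSpine R t u → LHead R t u
  | lam {t u : Lam} : LHead R t u → LHead R (.lam t) (.lam u)

/-- β-reduction. -/
def LBeta : Lam → Lam → Prop := LFull LBetaRoot
/-- η-reduction. -/
def LEta : Lam → Lam → Prop := LFull LEtaRoot
/-- Head reduction. -/
def LHStep : Lam → Lam → Prop := LHead LBetaRoot
/-- Multistep head reduction. -/
def LHSteps : Lam → Lam → Prop := Relation.ReflTransGen LHStep

/-- β-conversion (reflexive-symmetric-transitive closure of β-reduction). -/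
def LBetaConv : Lam → Lam → Prop :=
  Relation.ReflTransGen (fun a b => LBeta a b ∨ LBeta b a)
/-- η-conversion. -/
def LEtaConv : Lam → Lam → Prop :=
  Relation.ReflTransGen (fun a b => LEta a b ∨ LEta b a)

/-- Head normal forms: no head step out of `t`. -/
def Lam.LHNF (t : Lam) : Prop := ∀ u, ¬ LHStep t u

/-- Head convergence: `t ⇓h`. -/
def Lam.HConv (t : Lam) : Prop := ∃ h, LHSteps t h ∧ h.LHNF

/-- Ordinary contexts (one hole). -/
inductive LCtx : Type
  | hole : LCtx
  | lam : LCtx → LCtx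
  | appL : LCtx → Lam → LCtx
  | appR : Lam → LCtx → LCtx

/-- Plugging (allowing variable capture). -/
def LCtx.fill : LCtx → Lam → Lam
  | .hole, t => t
  | .lam C, t => .lam (C.fill t)
  | .appL C u, t => .app (C.fill t) u
  | .appR s C, t => .app s (C.fill t)

/-- Head contextual preorder on λ-terms. -/
def CtxLe (t u : Lam) : Prop := ∀ C : LCtx, (C.fill t).HConv → (C.fill u).HConv

/-! ### Checkers terms -/

inductive CTerm : Type
  | var : ℕ → CTerm
  | lam : Player → CTerm → CTerm
  | app : Player → CTerm → CTerm → CTerm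
deriving DecidableEq

namespace CTerm

/-- Shift the free de Bruijn indices ≥ `d` by one. -/
def liftAt : CTerm → ℕ → CTerm
  | .var n, d => .var (if n < d then n else n + 1)
  | .lam p t, d => .lam p (t.liftAt (d + 1))
  | .app p t u, d => .app p (t.liftAt d) (u.liftAt d)

/-- Capture-avoiding substitution of `u` for the de Bruijn index `x`. -/
def subst : CTerm → ℕ → CTerm → CTerm
  | .var n, x, u => if n = x then u else if x < n then .var (n - 1) else .var n
  | .lam p t, x, u => .lam p (t.subst (x + 1) (u.liftAt 0))
  | .app p t s, x, u => .app p (t.subst x u) (s.subst x u)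

/-- The underlying ordinary λ-term of a checkers term. -/
def untag : CTerm → Lam
  | .var n => .var n
  | .lam _ t => .lam t.untag
  | .app _ t u => .app t.untag u.untag

end CTerm

/-- Player lifting: tag every abstraction and application with player `p`. -/
def Lam.tag : Lam → Player → CTerm
  | .var n, _ => .var n
  | .lam t, p => .lam p (t.tag p)
  | .app t u, p => .app p (t.tag p) (u.tag p)

/-- Silent β root rule: the abstraction and the application carry the same player. -/
inductive SilentRoot : CTerm → CTerm → Prop
  | beta (p : Player) (t u : CTerm) : SilentRoot (.app p (.lam p t) u) (t.subst 0 u)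

/-- Interaction β root rule: the application carries the opposite player of the abstraction. -/
inductive InterRoot : CTerm → CTerm → Prop
  | beta (p : Player) (t u : CTerm) : InterRoot (.app p.op (.lam p t) u) (t.subst 0 u)

/-- Closure of a root relation under all checkers contexts. -/
inductive CFull (R : CTerm → CTerm → Prop) : CTerm → CTerm → Prop
  | root {t u : CTerm} : R t u → CFull R t u
  | lam (p : Player) {t u : CTerm} : CFull R t u → CFull R (.lam p t) (.lam p u)
  | appL (p : Player) {t t' : CTerm} (u : CTerm) : CFull R t t' → CFull R (.app p t u) (.app p t' u)
  | appR (p : Player) (t : CTerm) {u u' : CTerm} : CFull R u u' → CFull R (.app p t u) (.app p t u')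

/-- Closure under applicative spine contexts `⟨·⟩ @_{q1} t1 … @_{qk} tk`. -/
inductive CSpine (R : CTerm → CTerm → Prop) : CTerm → CTerm → Prop
  | root {t u : CTerm} : R t u → CSpine R t u
  | appL (p : Player) {t t' : CTerm} (u : CTerm) : CSpine R t t' → CSpine R (.app p t u) (.app p t' u)

/-- Closure under checkers head contexts `λ_{p1}x1…λ_{pn}xn.⟨·⟩ @_{q1} t1 … @_{qk} tk`. -/
inductive CHead (R : CTerm → CTerm → Prop) : CTerm → CTerm → Prop
  | spine {t u : CTerm} : CSpine R t u → CHead R t u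
  | lam (p : Player) {t u : CTerm} : CHead R t u → CHead R (.lam p t) (.lam p u)

/-- Silent β-reduction `→τ`. -/
def StepTau : CTerm → CTerm → Prop := CFull SilentRoot
/-- Interaction β-reduction `→⊛`. -/
def StepInt : CTerm → CTerm → Prop := CFull InterRoot
/-- Checkers β-reduction `→βch`. -/
def StepBch (t u : CTerm) : Prop := StepTau t u ∨ StepInt t u

/-- Silent head reduction `→hτ`. -/
def HStepTau : CTerm → CTerm → Prop := CHead SilentRoot
/-- Interaction head reduction `→h⊛`. -/
def HStepInt : CTerm → CTerm → Prop := CHead InterRoot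
/-- Checkers head reduction `→hch`. -/
def HStepCh (t u : CTerm) : Prop := HStepTau t u ∨ HStepInt t u

/-- Checkers head normal form. -/
def CTerm.HNF (t : CTerm) : Prop := ∀ u, ¬ HStepCh t u

/-- `BigStep t k` means `t ⇓^k`: the (deterministic) checkers head evaluation of `t`
terminates and performs exactly `k` interaction steps. -/
inductive BigStep : CTerm → ℕ → Prop
  | nf {t : CTerm} : t.HNF → BigStep t 0
  | silent {t u : CTerm} {k : ℕ} : HStepTau t u → BigStep u k → BigStep t k
  | inter {t u : CTerm} {k : ℕ} : HStepInt t u → BigStep u k → BigStep t (k + 1)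

/-- `HRed t n i u`: a checkers head reduction sequence from `t` to `u` of length `n`
containing exactly `i` interaction steps. -/
inductive HRed : CTerm → ℕ → ℕ → CTerm → Prop
  | refl (t : CTerm) : HRed t 0 0 t
  | silent {t u s : CTerm} {n i : ℕ} : HStepTau t u → HRed u n i s → HRed t (n + 1) i s
  | inter {t u s : CTerm} {n i : ℕ} : HStepInt t u → HRed u n i s → HRed t (n + 1) (i + 1) s

/-- Checkers contexts (one hole). -/
inductive CCtx : Type
  | hole : CCtx
  | lam : Player → CCtx → CCtx
  | appL : Player → CCtx → CTerm → CCtx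
  | appR : Player → CTerm → CCtx → CCtx

/-- Plugging (allowing variable capture). -/
def CCtx.fill : CCtx → CTerm → CTerm
  | .hole, t => t
  | .lam p C, t => .lam p (C.fill t)
  | .appL p C u, t => .app p (C.fill t) u
  | .appR p s C, t => .app p s (C.fill t)

/-- Player lifting of ordinary contexts. -/
def LCtx.tag : LCtx → Player → CCtx
  | .hole, _ => .hole
  | .lam C, p => .lam p (C.tag p)
  | .appL C u, p => .appL p (C.tag p) (u.tag p)
  | .appR s C, p => .appR p (s.tag p) (C.tag p)

/-- Checkers interaction preorder `≼ctx⊛` on checkers terms. -/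
def IntCtxLe (t u : CTerm) : Prop :=
  ∀ (C : CCtx) (k : ℕ), BigStep (C.fill t) k → BigStep (C.fill u) k

/-- Checkers interaction improvement `≼imp⊛` on checkers terms. -/
def ImpCtxLe (t u : CTerm) : Prop :=
  ∀ (C : CCtx) (k : ℕ), BigStep (C.fill t) k → ∃ k', k' ≤ k ∧ BigStep (C.fill u) k'

/-- Interaction preorder `⊑int` on ordinary λ-terms, via black lifting. -/
def IntLe (t u : Lam) : Prop := IntCtxLe (t.tag .black) (u.tag .black)

/-- Interaction improvement `⊑int·imp` on ordinary λ-terms, via black lifting. -/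
def ImpLe (t u : Lam) : Prop := ImpCtxLe (t.tag .black) (u.tag .black)

/-- Interaction equivalence `≡int`. -/
def IntEq (t u : Lam) : Prop := IntLe t u ∧ IntLe u t

/-- Silent conversion `=τ`: reflexive-symmetric-transitive closure of `→τ`. -/
def SilentConv : CTerm → CTerm → Prop :=
  Relation.ReflTransGen (fun a b => StepTau a b ∨ StepTau b a)

/-!
A *standard* silent reduction first fires silent spine redexes until the outermost constructor is
the final one, and then proceeds inside its subterms. Every silent step is standard and standard
reductions are stable under substitution, so they simulate head evaluation in both directions: a
head step of the source is either the next step of the reduction, hence silent, or has a residual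
of the same kind in the target; a head step of the target is preceded in the source by silent head
steps only. Neither direction changes the number of interaction steps.
-/

/-! ### Lifting and substitution -/

namespace CTerm

theorem liftAt_liftAt (t : CTerm) {d e : ℕ} (h : d ≤ e) :
    (t.liftAt e).liftAt d = (t.liftAt d).liftAt (e + 1) := by
  induction t generalizing d e with
  | var n => grind [liftAt]
  | lam p t ih => simp only [liftAt, ih (Nat.succ_le_succ h)]
  | app p t s iht ihs => simp only [liftAt, iht h, ihs h]

theorem liftAt_subst_of_le (t u : CTerm) {x d : ℕ} (h : x ≤ d) :
    (t.subst x u).liftAt d = (t.liftAt (d + 1)).subst x (u.liftAt d) := by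
  induction t generalizing x d u with
  | var n => grind [liftAt, subst]
  | lam p t ih =>
    simp only [liftAt, subst, ih _ (Nat.succ_le_succ h), liftAt_liftAt u d.zero_le]
  | app p t s iht ihs => simp only [liftAt, subst, iht _ h, ihs _ h]

theorem liftAt_subst_of_ge (t u : CTerm) {x d : ℕ} (h : d ≤ x) :
    (t.subst x u).liftAt d = (t.liftAt d).subst (x + 1) (u.liftAt d) := by
  induction t generalizing x d u with
  | var n => grind [liftAt, subst]
  | lam p t ih =>
    simp only [liftAt, subst, ih _ (Nat.succ_le_succ h), liftAt_liftAt u d.zero_le]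
  | app p t s iht ihs => simp only [liftAt, subst, iht _ h, ihs _ h]

theorem subst_liftAt_self (t u : CTerm) (d : ℕ) : (t.liftAt d).subst d u = t := by
  induction t generalizing d u with
  | var n => grind [liftAt, subst]
  | lam p t ih => simp only [liftAt, subst, ih]
  | app p t s iht ihs => simp only [liftAt, subst, iht, ihs]

theorem subst_subst (t u v : CTerm) {x y : ℕ} (h : x ≤ y) :
    (t.subst x u).subst y v = (t.subst (y + 1) (v.liftAt x)).subst x (u.subst y v) := by
  induction t generalizing x y u v with
  | var n => grind [subst, subst_liftAt_self]
  | lam p t ih =>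
    simp only [subst, ih _ _ (Nat.succ_le_succ h), liftAt_liftAt v x.zero_le,
      liftAt_subst_of_ge u v y.zero_le]
  | app p t s iht ihs => simp only [subst, iht _ _ h, ihs _ _ h]

end CTerm

/-! ### Head steps by interaction cost -/

theorem Player.gamma_eq_zero_iff {p q : Player} : p.gamma q = 0 ↔ p = q := by
  simp [gamma]

theorem Player.gamma_eq_one_iff {p q : Player} : p.gamma q = 1 ↔ p = q.op := by
  cases p <;> cases q <;> simp [gamma, op]

theorem Player.gamma_eq_zero_or_one (p q : Player) : p.gamma q = 0 ∨ p.gamma q = 1 := by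
  cases p <;> cases q <;> simp [gamma]

/-- The β-rule of interaction cost `n`: silent for `n = 0`, interaction for `n = 1`. It treats
the two root rules uniformly. -/
inductive BetaRoot (n : ℕ) : CTerm → CTerm → Prop
  | beta {p q : Player} (h : p.gamma q = n) (t u : CTerm) :
      BetaRoot n (.app p (.lam q t) u) (t.subst 0 u)

/-- Spine reduction (head reduction that does not enter abstractions) of interaction cost `n`. -/
abbrev SpineStep (n : ℕ) : CTerm → CTerm → Prop := CSpine (BetaRoot n)

/-- Head reduction of interaction cost `n`. -/
abbrev HeadStep (n : ℕ) : CTerm → CTerm → Prop := CHead (BetaRoot n)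

/-- Multistep silent spine reduction. -/
abbrev SilentSpineSteps : CTerm → CTerm → Prop := Relation.ReflTransGen (SpineStep 0)

/-- Multistep silent head reduction. -/
abbrev SilentHeadSteps : CTerm → CTerm → Prop := Relation.ReflTransGen (HeadStep 0)

theorem silentRoot_eq_betaRoot : SilentRoot = BetaRoot 0 := by
  ext t u
  constructor
  · rintro ⟨p, t, u⟩
    exact .beta (Player.gamma_eq_zero_iff.2 rfl) t u
  · rintro ⟨h, t, u⟩
    obtain rfl := Player.gamma_eq_zero_iff.1 h
    exact .beta _ t u

theorem interRoot_eq_betaRoot : InterRoot = BetaRoot 1 := by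
  ext t u
  constructor
  · rintro ⟨p, t, u⟩
    exact .beta (Player.gamma_eq_one_iff.2 rfl) t u
  · rintro ⟨h, t, u⟩
    obtain rfl := Player.gamma_eq_one_iff.1 h
    exact .beta _ t u

theorem hStepTau_eq_headStep : HStepTau = HeadStep 0 := by
  rw [HStepTau, silentRoot_eq_betaRoot]

theorem hStepInt_eq_headStep : HStepInt = HeadStep 1 := by
  rw [HStepInt, interRoot_eq_betaRoot]

theorem CSpine.exists_root {R : CTerm → CTerm → Prop} {t u : CTerm} (h : CSpine R t u) :
    ∃ a b, R a b := by
  induction h with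
  | root h => exact ⟨_, _, h⟩
  | appL _ _ _ ih => exact ih

theorem CHead.exists_root {R : CTerm → CTerm → Prop} {t u : CTerm} (h : CHead R t u) :
    ∃ a b, R a b := by
  induction h with
  | spine h => exact h.exists_root
  | lam _ _ ih => exact ih

theorem HeadStep.cost_eq_zero_or_one {n : ℕ} {t u : CTerm} (h : HeadStep n t u) :
    n = 0 ∨ n = 1 := by
  obtain ⟨_, _, ⟨rfl, _, _⟩⟩ := h.exists_root
  exact Player.gamma_eq_zero_or_one _ _

theorem hStepCh_iff_exists_headStep {t u : CTerm} : HStepCh t u ↔ ∃ n, HeadStep n t u := by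
  rw [HStepCh, hStepTau_eq_headStep, hStepInt_eq_headStep]
  constructor
  · rintro (h | h)
    exacts [⟨0, h⟩, ⟨1, h⟩]
  · rintro ⟨n, h⟩
    obtain rfl | rfl := h.cost_eq_zero_or_one
    exacts [.inl h, .inr h]

theorem CTerm.hnf_iff_forall_not_headStep {t : CTerm} :
    t.HNF ↔ ∀ n u, ¬ HeadStep n t u := by
  simp only [HNF, hStepCh_iff_exists_headStep, not_exists]
  exact forall_comm

namespace SpineStep

variable {m n : ℕ} {t u v : CTerm}

theorem liftAt (h : SpineStep n t u) (d : ℕ) : SpineStep n (t.liftAt d) (u.liftAt d) := by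
  induction h with
  | root h =>
    obtain ⟨hn, t, u⟩ := h
    rw [CTerm.liftAt_subst_of_le _ _ d.zero_le]
    exact .root (.beta hn _ _)
  | appL p _ _ ih => exact .appL p _ ih

theorem subst (h : SpineStep n t u) (x : ℕ) (r : CTerm) :
    SpineStep n (t.subst x r) (u.subst x r) := by
  induction h with
  | root h =>
    obtain ⟨hn, t, u⟩ := h
    rw [CTerm.subst_subst _ _ _ x.zero_le]
    exact .root (.beta hn _ _)
  | appL p _ _ ih => exact .appL p _ ih

theorem not_var {i : ℕ} : ¬ SpineStep n (.var i) u := by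
  rintro (⟨⟨⟩⟩ | _)

theorem not_lam {p : Player} : ¬ SpineStep n (.lam p t) u := by
  rintro (⟨⟨⟩⟩ | _)

theorem deterministic (h : SpineStep m t u) (h' : SpineStep n t v) : m = n ∧ u = v := by
  induction h generalizing v with
  | root h =>
    obtain ⟨rfl, s, r⟩ := h
    cases h' with
    | root h' => cases h' with | beta hn => exact ⟨hn, rfl⟩
    | appL _ _ h' => exact (not_lam h').elim
  | appL p r h ih =>
    cases h' with
    | root h' => cases h' with | beta => exact (not_lam h).elim
    | appL _ _ h' =>
      obtain ⟨hmn, rfl⟩ := ih h'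
      exact ⟨hmn, rfl⟩

end SpineStep

namespace SilentSpineSteps

variable {t u : CTerm}

theorem liftAt (h : SilentSpineSteps t u) (d : ℕ) :
    SilentSpineSteps (t.liftAt d) (u.liftAt d) :=
  h.lift (CTerm.liftAt · d) fun _ _ hs => SpineStep.liftAt hs d

theorem subst (h : SilentSpineSteps t u) (x : ℕ) (r : CTerm) :
    SilentSpineSteps (t.subst x r) (u.subst x r) :=
  h.lift (CTerm.subst · x r) fun _ _ hs => SpineStep.subst hs x r

theorem appL (h : SilentSpineSteps t u) (p : Player) (r : CTerm) :
    SilentSpineSteps (.app p t r) (.app p u r) :=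
  h.lift (CTerm.app p · r) fun _ _ => .appL p r

theorem silentHeadSteps (h : SilentSpineSteps t u) : SilentHeadSteps t u :=
  Relation.ReflTransGen.mono (fun _ _ => CHead.spine) _ _ h

theorem eq_of_lam {p : Player} (h : SilentSpineSteps (.lam p t) u) : u = .lam p t := by
  obtain rfl | ⟨_, hs, _⟩ := h.cases_head
  exacts [rfl, (SpineStep.not_lam hs).elim]

theorem eq_or_step {n : ℕ} {t' : CTerm} (h : SilentSpineSteps t u) (ht : SpineStep n t t') :
    t = u ∨ n = 0 ∧ SilentSpineSteps t' u := by
  obtain rfl | ⟨c, hc, hcu⟩ := h.cases_head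
  · exact .inl rfl
  · obtain ⟨rfl, rfl⟩ := SpineStep.deterministic hc ht
    exact .inr ⟨rfl, hcu⟩

end SilentSpineSteps

theorem SilentHeadSteps.lam {t u : CTerm} (h : SilentHeadSteps t u) (p : Player) :
    SilentHeadSteps (.lam p t) (.lam p u) :=
  h.lift (CTerm.lam p) fun _ _ => .lam p

/-! ### Head normal forms -/

/-- Neutral terms `x @_{q1} t1 … @_{qk} tk`: the bodies of head normal forms. -/
inductive CTerm.Neutral : CTerm → Prop
  | var (i : ℕ) : Neutral (.var i)
  | app (p : Player) {t : CTerm} (u : CTerm) : t.Neutral → Neutral (.app p t u)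

namespace CTerm

theorem Neutral.not_spineStep {t u : CTerm} {n : ℕ} (ht : t.Neutral) : ¬ SpineStep n t u := by
  induction ht generalizing u with
  | var i => exact SpineStep.not_var
  | app p r ht ih =>
    rintro (⟨⟨⟩⟩ | ⟨_, _, hs⟩)
    · cases ht
    · exact ih hs

theorem Neutral.hnf {t : CTerm} (ht : t.Neutral) : t.HNF := by
  rw [hnf_iff_forall_not_headStep]
  rintro n u (hs | _)
  · exact ht.not_spineStep hs
  · cases ht

theorem hnf_lam_iff {p : Player} {t : CTerm} : (CTerm.lam p t).HNF ↔ t.HNF := by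
  simp only [hnf_iff_forall_not_headStep]
  constructor
  · exact fun h n u hs => h n _ (.lam p hs)
  · rintro h n _ (hs | ⟨_, hs⟩)
    exacts [SpineStep.not_lam hs, h n _ hs]

theorem neutral_of_forall_not_spineStep {t : CTerm} (ht : ∀ n u, ¬ SpineStep n t u)
    (hlam : ∀ p s, t ≠ .lam p s) : t.Neutral := by
  induction t with
  | var i => exact .var i
  | lam p s => exact (hlam p s rfl).elim
  | app p s r ih =>
    refine .app p r (ih (fun n u hs => ht n _ (.appL p r hs)) ?_)
    rintro q s' rfl
    exact ht _ _ (.root (.beta rfl s' r))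

theorem HNF.neutral_of_app {p : Player} {t u : CTerm} (h : (CTerm.app p t u).HNF) :
    (CTerm.app p t u).Neutral :=
  neutral_of_forall_not_spineStep
    (fun n v hs => hnf_iff_forall_not_headStep.1 h n v (.spine hs)) (by simp)

end CTerm

/-! ### Standard reductions -/

/-- Standard silent reductions, in the style of Kashima: silent spine steps down to a term with
the outermost constructor of the target, then standard reductions of the immediate subterms. -/
inductive StandardRed : CTerm → CTerm → Prop
  | var {t : CTerm} {i : ℕ} : SilentSpineSteps t (.var i) → StandardRed t (.var i)
  | lam {t s s' : CTerm} {p : Player} :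
      SilentSpineSteps t (.lam p s) → StandardRed s s' → StandardRed t (.lam p s')
  | app {t s s' r r' : CTerm} {p : Player} : SilentSpineSteps t (.app p s r) →
      StandardRed s s' → StandardRed r r' → StandardRed t (.app p s' r')

namespace StandardRed

variable {n : ℕ} {t t' u u' : CTerm}

@[refl]
theorem refl (t : CTerm) : StandardRed t t := by
  induction t with
  | var i => exact .var .refl
  | lam p s ih => exact .lam .refl ih
  | app p s r ihs ihr => exact .app .refl ihs ihr

theorem of_silentSpineSteps (h : SilentSpineSteps t t') (hs : StandardRed t' u) :
    StandardRed t u := by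
  cases hs with
  | var hv => exact .var (h.trans hv)
  | lam hl hs => exact .lam (h.trans hl) hs
  | app ha hs hr => exact .app (h.trans ha) hs hr

theorem liftAt (h : StandardRed t u) (d : ℕ) : StandardRed (t.liftAt d) (u.liftAt d) := by
  induction h generalizing d with
  | var hv => exact of_silentSpineSteps (hv.liftAt d) (refl _)
  | lam hl _ ih => exact .lam (hl.liftAt d) (ih _)
  | app ha _ _ ihs ihr => exact .app (ha.liftAt d) (ihs d) (ihr d)

theorem subst {r r' : CTerm} (h : StandardRed t u) (x : ℕ) (hr : StandardRed r r') :
    StandardRed (t.subst x r) (u.subst x r') := by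
  induction h generalizing x r r' with
  | var hv =>
    refine of_silentSpineSteps (hv.subst x r) ?_
    simp only [CTerm.subst]
    split_ifs
    exacts [hr, refl _, refl _]
  | lam hl _ ih => exact .lam (hl.subst x r) (ih _ (hr.liftAt 0))
  | app ha _ _ ihs iha => exact .app (ha.subst x r) (ihs x hr) (iha x hr)

theorem of_lam {p : Player} (h : StandardRed (.lam p t) u) :
    ∃ t', u = .lam p t' ∧ StandardRed t t' := by
  cases h with
  | var hv => cases hv.eq_of_lam
  | lam hl hs =>
    cases hl.eq_of_lam
    exact ⟨_, rfl, hs⟩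
  | app ha => cases ha.eq_of_lam

theorem spineStep_forward (h : StandardRed t u) (ht : SpineStep n t t') :
    n = 0 ∧ StandardRed t' u ∨ ∃ u', SpineStep n u u' ∧ StandardRed t' u' := by
  induction h generalizing t' with
  | var hv =>
    obtain rfl | ⟨hn, hv'⟩ := hv.eq_or_step ht
    exacts [(SpineStep.not_var ht).elim, .inl ⟨hn, .var hv'⟩]
  | lam hl hs =>
    obtain rfl | ⟨hn, hl'⟩ := hl.eq_or_step ht
    exacts [(SpineStep.not_lam ht).elim, .inl ⟨hn, .lam hl' hs⟩]
  | app ha hs hr ih =>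
    obtain rfl | ⟨hn, ha'⟩ := ha.eq_or_step ht
    · cases ht with
      | root ht =>
        obtain ⟨hn, s, r⟩ := ht
        obtain ⟨s', rfl, hs'⟩ := hs.of_lam
        exact .inr ⟨_, .root (.beta hn _ _), hs'.subst 0 hr⟩
      | appL _ _ ht =>
        obtain ⟨hn, hs'⟩ | ⟨u', hu, hs'⟩ := ih ht
        · exact .inl ⟨hn, .app .refl hs' hr⟩
        · exact .inr ⟨_, .appL _ _ hu, .app .refl hs' hr⟩
    · exact .inl ⟨hn, .app ha' hs hr⟩

theorem headStep_forward (h : StandardRed t u) (ht : HeadStep n t t') :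
    n = 0 ∧ StandardRed t' u ∨ ∃ u', HeadStep n u u' ∧ StandardRed t' u' := by
  induction ht generalizing u with
  | spine ht =>
    obtain hsilent | ⟨u', hu, hs⟩ := h.spineStep_forward ht
    exacts [.inl hsilent, .inr ⟨u', .spine hu, hs⟩]
  | lam p _ ih =>
    obtain ⟨s, rfl, hs⟩ := h.of_lam
    obtain ⟨hn, hs'⟩ | ⟨s', hss', hs'⟩ := ih hs
    · exact .inl ⟨hn, .lam .refl hs'⟩
    · exact .inr ⟨_, .lam p hss', .lam .refl hs'⟩

theorem spineStep_backward (h : StandardRed t u) (hu : SpineStep n u u') :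
    ∃ s t', SilentSpineSteps t s ∧ SpineStep n s t' ∧ StandardRed t' u' := by
  induction hu generalizing t with
  | root hu =>
    obtain ⟨hn, _, _⟩ := hu
    obtain _ | _ | ⟨ha, hs, hr⟩ := h
    obtain _ | ⟨hl, hb⟩ | _ := hs
    exact ⟨_, _, ha.trans (hl.appL _ _), .root (.beta hn _ _), hb.subst 0 hr⟩
  | appL p _ _ ih =>
    obtain _ | _ | ⟨ha, hs, hr⟩ := h
    obtain ⟨s, t', hts, hst, hs'⟩ := ih hs
    exact ⟨_, _, ha.trans (hts.appL _ _), .appL p _ hst, .app .refl hs' hr⟩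

theorem headStep_backward (h : StandardRed t u) (hu : HeadStep n u u') :
    ∃ s t', SilentHeadSteps t s ∧ HeadStep n s t' ∧ StandardRed t' u' := by
  induction hu generalizing t with
  | spine hu =>
    obtain ⟨s, t', hts, hst, hs⟩ := h.spineStep_backward hu
    exact ⟨s, t', hts.silentHeadSteps, .spine hst, hs⟩
  | lam p _ ih =>
    obtain _ | ⟨hl, hb⟩ | _ := h
    obtain ⟨s, t', hts, hst, hs⟩ := ih hb
    exact ⟨_, _, hl.silentHeadSteps.trans (hts.lam p), .lam p hst, .lam .refl hs⟩

theorem hnf_forward (h : StandardRed t u) (ht : t.HNF) : u.HNF := by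
  rw [CTerm.hnf_iff_forall_not_headStep] at ht ⊢
  intro n u' hu
  obtain ⟨s, t', hts, hst, _⟩ := h.headStep_backward hu
  obtain rfl | ⟨c, htc, _⟩ := hts.cases_head
  exacts [ht _ _ hst, ht _ _ htc]

theorem neutral_backward (h : StandardRed t u) (hu : u.Neutral) :
    ∃ t', SilentSpineSteps t t' ∧ t'.Neutral := by
  induction hu generalizing t with
  | var i =>
    obtain ⟨hv⟩ | _ | _ := h
    exact ⟨_, hv, .var i⟩
  | app p _ _ ih =>
    obtain _ | _ | ⟨ha, hs, _⟩ := h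
    obtain ⟨t', ht, hn⟩ := ih hs
    exact ⟨_, ha.trans (ht.appL _ _), .app p _ hn⟩

theorem hnf_backward (h : StandardRed t u) (hu : u.HNF) :
    ∃ t', SilentHeadSteps t t' ∧ t'.HNF := by
  induction h with
  | var hv => exact ⟨_, hv.silentHeadSteps, hu⟩
  | lam hl _ ih =>
    obtain ⟨t', ht, hn⟩ := ih (CTerm.hnf_lam_iff.1 hu)
    exact ⟨_, hl.silentHeadSteps.trans (ht.lam _), CTerm.hnf_lam_iff.2 hn⟩
  | app ha hs hr =>
    obtain ⟨t', ht, hn⟩ := (StandardRed.app ha hs hr).neutral_backward hu.neutral_of_app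
    exact ⟨t', ht.silentHeadSteps, hn.hnf⟩

end StandardRed

theorem StepTau.standardRed {t u : CTerm} (h : StepTau t u) : StandardRed t u := by
  rw [StepTau, silentRoot_eq_betaRoot] at h
  induction h with
  | root h => exact .of_silentSpineSteps (.single (.root h)) (.refl _)
  | lam _ _ ih => exact .lam .refl ih
  | appL _ _ _ ih => exact .app .refl ih (.refl _)
  | appR _ _ _ ih => exact .app .refl (.refl _) ih

/-! ### Evaluation -/

namespace BigStep

variable {n k : ℕ} {t u : CTerm}

theorem of_headStep (h : HeadStep n t u) (hu : BigStep u k) : BigStep t (k + n) := by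
  obtain rfl | rfl := h.cost_eq_zero_or_one
  · exact .silent (hStepTau_eq_headStep ▸ h) hu
  · exact .inter (hStepInt_eq_headStep ▸ h) hu

theorem of_silentHeadSteps (h : SilentHeadSteps t u) (hu : BigStep u k) : BigStep t k := by
  induction h using Relation.ReflTransGen.head_induction_on with
  | refl => exact hu
  | head hs _ ih => exact of_headStep hs ih

theorem of_simulation {S : CTerm → CTerm → Prop}
    (hnf : ∀ {t u}, S t u → t.HNF → BigStep u 0)
    (step : ∀ {n t t' u}, S t u → HeadStep n t t' →
      ∃ u', S t' u' ∧ ∀ k, BigStep u' k → BigStep u (k + n))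
    (hS : S t u) (ht : BigStep t k) : BigStep u k := by
  induction ht generalizing u with
  | nf h => exact hnf hS h
  | silent h _ ih =>
    obtain ⟨u', hS', hu⟩ := step hS (hStepTau_eq_headStep ▸ h)
    exact hu _ (ih hS')
  | inter h _ ih =>
    obtain ⟨u', hS', hu⟩ := step hS (hStepInt_eq_headStep ▸ h)
    exact hu _ (ih hS')

end BigStep

theorem StandardRed.bigStep_iff {t u : CTerm} {k : ℕ} (h : StandardRed t u) :
    BigStep t k ↔ BigStep u k := by
  constructor
  · refine BigStep.of_simulation (fun h ht => .nf (h.hnf_forward ht)) (fun h ht => ?_) h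
    obtain ⟨rfl, hs⟩ | ⟨u', hu, hs⟩ := h.headStep_forward ht
    · exact ⟨_, hs, fun _ hk => hk⟩
    · exact ⟨u', hs, fun _ => .of_headStep hu⟩
  · refine BigStep.of_simulation (S := flip StandardRed) (fun h hu => ?_) (fun h hu => ?_) h
    · obtain ⟨t', ht, hn⟩ := h.hnf_backward hu
      exact .of_silentHeadSteps ht (.nf hn)
    · obtain ⟨s, t', hts, hst, hs⟩ := h.headStep_backward hu
      exact ⟨t', hs, fun _ hk => .of_silentHeadSteps hts (.of_headStep hst hk)⟩

theorem StepTau.fill {t u : CTerm} (h : StepTau t u) (C : CCtx) :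
    StepTau (C.fill t) (C.fill u) := by
  induction C with
  | hole => exact h
  | lam p _ ih => exact .lam p ih
  | appL p _ r ih => exact .appL p r ih
  | appR p s _ ih => exact .appR p s ih

/-- The checkers interaction preorder includes silent conversion. -/
theorem silent_conv_included_in_interaction_preorder (t u : CTerm)
    (h : SilentConv t u) : IntCtxLe t u := by
  intro C k ht
  induction h with
  | refl => exact ht
  | tail _ h ih =>
    obtain h | h := h
    · exact (h.fill C).standardRed.bigStep_iff.1 ih
    · exact (h.fill C).standardRed.bigStep_iff.2 ih
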